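/- Let f : ℝ^d → ℝ be convex and differentiable, let μ > 0, and suppose the Fenchel conjugate f* is finite-valued and differentiable on ℝ^d. Then f is μ-strongly convex if and only if f*(u) ≤ f*(v) + ⟨∇f*(v), u − v⟩ + (1/(2μ)) ‖u − v‖² for all u, v ∈ ℝ^d (i.e., f* is (1/μ)-smooth). -/

import Mathlib

open scoped RealInnerProductSpace

/-!
Everything rests on the equality case of Fenchel's inequality `⟪y, u⟫ - f y ≤ f* u`: if `x`
attains the supremum defining `f* v`, then `f* - ⟪x, ·⟫` is minimal at `v`, so `∇f* v = x`
(`gradient_conjugate_eq`), and `f - ⟪·, v⟫` is minimal at `x`, so `∇f x = v`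
(`gradient_eq_of_attained`).

If `f` is strongly convex, then `f - ⟪·, v⟫` is coercive, so the supremum is attained at some `x`;
inserting the quadratic lower bound of `f` at `x` into the supremum defining `f* u`, and bounding
`⟪y - x, u - v⟫ - μ / 2 * ‖y - x‖ ^ 2` by `1 / (2 * μ) * ‖u - v‖ ^ 2`, gives the upper bound on
`f* u`.

Conversely, by convexity the supremum defining `f* (∇f x)` is attained at `x`. With `v = ∇f x`,
the inequality `f y ≥ ⟪y, u⟫ - f* u` and the upper bound on `f* u`, taken at the optimal point
`u = v + μ • (y - x)`, yield strong convexity.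
-/

theorem inner_sub_sq_le {E : Type*} [NormedAddCommGroup E] [InnerProductSpace ℝ E] {μ : ℝ}
    (hμ : 0 < μ) (a b : E) :
    ⟪a, b⟫ - μ / 2 * ‖a‖ ^ 2 ≤ 1 / (2 * μ) * ‖b‖ ^ 2 := by
  -- Completing the square.
  have h : 0 ≤ 1 / (2 * μ) * ‖b - μ • a‖ ^ 2 := by positivity
  rw [norm_sub_sq_real, norm_smul, inner_smul_right, Real.norm_of_nonneg hμ.le,
    real_inner_comm] at h
  have e : 1 / (2 * μ) * (‖b‖ ^ 2 - 2 * (μ * ⟪a, b⟫) + (μ * ‖a‖) ^ 2)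
      = 1 / (2 * μ) * ‖b‖ ^ 2 - ⟪a, b⟫ + μ / 2 * ‖a‖ ^ 2 := by
    field_simp
  linarith

section Fenchel

variable {E : Type*} [NormedAddCommGroup E] [InnerProductSpace ℝ E] [CompleteSpace E]

/-- First-order optimality: if `g - ⟪w, ·⟫` is minimal at `a`, then `∇g a = w`. -/
theorem gradient_eq_of_forall_le {g : E → ℝ} (hg : Differentiable ℝ g) {a w : E}
    (h : ∀ z, g a - ⟪w, a⟫ ≤ g z - ⟪w, z⟫) : gradient g a = w := by
  have h1 : HasFDerivAt (fun z => g z - ⟪w, z⟫)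
      (InnerProductSpace.toDual ℝ E (gradient g a) - innerSL ℝ w) a :=
    ((hg a).hasGradientAt.hasFDerivAt).sub (innerSL ℝ w).hasFDerivAt
  have h2 : IsLocalMin (fun z => g z - ⟪w, z⟫) a := Filter.Eventually.of_forall h
  have h3 := h2.hasFDerivAt_eq_zero h1
  refine ext_inner_right ℝ fun z => ?_
  have h4 := DFunLike.congr_fun h3 z
  simpa [sub_eq_zero] using h4

theorem gradient_conjugate_eq {f fstar : E → ℝ}
    (hfstar : ∀ u, IsLUB (Set.range fun x => ⟪x, u⟫ - f x) (fstar u))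
    (hdiff : Differentiable ℝ fstar) {x v : E} (hx : fstar v = ⟪x, v⟫ - f x) :
    gradient fstar v = x := by
  refine gradient_eq_of_forall_le hdiff fun u => ?_
  have : ⟪x, u⟫ - f x ≤ fstar u := (hfstar u).1 ⟨x, rfl⟩
  linarith

theorem gradient_eq_of_attained {f fstar : E → ℝ}
    (hfstar : ∀ u, IsLUB (Set.range fun x => ⟪x, u⟫ - f x) (fstar u))
    (hf : Differentiable ℝ f) {x v : E} (hx : fstar v = ⟪x, v⟫ - f x) :
    gradient f x = v := by
  refine gradient_eq_of_forall_le hf fun y => ?_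
  have : ⟪y, v⟫ - f y ≤ fstar v := (hfstar v).1 ⟨y, rfl⟩
  rw [real_inner_comm, real_inner_comm y]
  linarith

theorem ConvexOn.add_inner_gradient_le {f : E → ℝ} (hconv : ConvexOn ℝ Set.univ f)
    (hf : Differentiable ℝ f) (x y : E) : f x + ⟪gradient f x, y - x⟫ ≤ f y := by
  have hc : ConvexOn ℝ Set.univ (f ∘ AffineMap.lineMap (k := ℝ) x y) :=
    hconv.comp_affineMap (AffineMap.lineMap x y)
  have hd : HasDerivAt (f ∘ AffineMap.lineMap (k := ℝ) x y) ⟪gradient f x, y - x⟫ 0 := by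
    have h1 : HasFDerivAt f (InnerProductSpace.toDual ℝ E (gradient f x))
        (AffineMap.lineMap (k := ℝ) x y 0) := by
      simpa using (hf x).hasGradientAt.hasFDerivAt
    simpa using h1.comp_hasDerivAt (0 : ℝ) AffineMap.hasDerivAt_lineMap
  have := hc.le_slope_of_hasDerivAt (Set.mem_univ 0) (Set.mem_univ 1) zero_lt_one hd
  simp only [slope_def_field, Function.comp_apply, AffineMap.lineMap_apply_zero,
    AffineMap.lineMap_apply_one, sub_zero, div_one] at this
  linarith

theorem conjugate_gradient_eq {f fstar : E → ℝ} (hconv : ConvexOn ℝ Set.univ f)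
    (hf : Differentiable ℝ f)
    (hfstar : ∀ u, IsLUB (Set.range fun x => ⟪x, u⟫ - f x) (fstar u)) (x : E) :
    fstar (gradient f x) = ⟪x, gradient f x⟫ - f x := by
  refine le_antisymm ((hfstar _).2 ?_) ((hfstar _).1 ⟨x, rfl⟩)
  rintro _ ⟨y, rfl⟩
  have h := hconv.add_inner_gradient_le hf x y
  rw [inner_sub_right, real_inner_comm, real_inner_comm x] at h
  simp only
  linarith

/-- A strongly convex function is coercive after subtraction of any linear functional, so in a
proper space the supremum defining its conjugate is attained. -/
theorem exists_conjugate_eq [ProperSpace E] {f fstar : E → ℝ} {μ : ℝ} (hμ : 0 < μ)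
    (hf : Differentiable ℝ f)
    (hfstar : ∀ u, IsLUB (Set.range fun x => ⟪x, u⟫ - f x) (fstar u))
    (hsc : ∀ x y, f y ≥ f x + ⟪gradient f x, y - x⟫ + μ / 2 * ‖y - x‖ ^ 2) (v : E) :
    ∃ x, fstar v = ⟪x, v⟫ - f x := by
  have hcont : Continuous fun y => f y - ⟪y, v⟫ := by
    have := hf.continuous
    fun_prop
  obtain ⟨x, hx⟩ := hcont.exists_forall_le' 0 (by
    -- Beyond radius `2 / μ * ‖∇f 0 - v‖` the quadratic term dominates the linear one.
    filter_upwards [tendsto_norm_cocompact_atTop.eventually_ge_atTop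
      (2 / μ * ‖gradient f 0 - v‖)] with y hy
    have h := hsc 0 y
    have h1 : -(‖gradient f 0 - v‖ * ‖y‖) ≤ ⟪gradient f 0 - v, y⟫ :=
      neg_le_of_abs_le (abs_real_inner_le_norm _ _)
    have h2 : ‖gradient f 0 - v‖ ≤ μ / 2 * ‖y‖ := by
      rw [div_mul_eq_mul_div, div_le_iff₀ hμ] at hy
      linarith
    have h3 := mul_le_mul_of_nonneg_right h2 (norm_nonneg y)
    rw [inner_sub_left, real_inner_comm y v] at h1
    simp only [sub_zero, inner_zero_left] at h ⊢
    nlinarith)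
  refine ⟨x, le_antisymm ((hfstar v).2 ?_) ((hfstar v).1 ⟨x, rfl⟩)⟩
  rintro _ ⟨y, rfl⟩
  have := hx y
  simp only
  linarith

end Fenchel

theorem strongConvex_iff_conjugate_smooth {d : ℕ}
    (f : EuclideanSpace ℝ (Fin d) → ℝ)
    (hconv : ConvexOn ℝ Set.univ f) (hf : Differentiable ℝ f) {μ : ℝ} (hμ : 0 < μ)
    (fstar : EuclideanSpace ℝ (Fin d) → ℝ)
    (hfstar : ∀ u, IsLUB (Set.range fun x => ⟪x, u⟫ - f x) (fstar u))
    (hdiff : Differentiable ℝ fstar) :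
    (∀ x y, f y ≥ f x + ⟪gradient f x, y - x⟫ + μ / 2 * ‖y - x‖ ^ 2) ↔
    (∀ u v : EuclideanSpace ℝ (Fin d),
      fstar u ≤ fstar v + ⟪gradient fstar v, u - v⟫ + 1 / (2 * μ) * ‖u - v‖ ^ 2) := by
  constructor
  · intro hsc u v
    obtain ⟨x, hx⟩ := exists_conjugate_eq hμ hf hfstar hsc v
    rw [gradient_conjugate_eq hfstar hdiff hx]
    refine (hfstar u).2 ?_
    rintro _ ⟨y, rfl⟩
    have h1 := hsc x y
    rw [gradient_eq_of_attained hfstar hf hx, real_inner_comm] at h1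
    have h2 := inner_sub_sq_le hμ (y - x) (u - v)
    simp only [inner_sub_left, inner_sub_right] at h1 h2 ⊢
    linarith
  · intro hsm x y
    have hx := conjugate_gradient_eq hconv hf hfstar x
    have h1 := hsm (gradient f x + μ • (y - x)) (gradient f x)
    have h2 : ⟪y, gradient f x + μ • (y - x)⟫ - f y ≤ fstar (gradient f x + μ • (y - x)) :=
      (hfstar _).1 ⟨y, rfl⟩
    rw [gradient_conjugate_eq hfstar hdiff hx, hx, add_sub_cancel_left, norm_smul,
      Real.norm_of_nonneg hμ.le, inner_smul_right] at h1
    rw [inner_add_right, inner_smul_right] at h2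
    have e1 : 1 / (2 * μ) * (μ * ‖y - x‖) ^ 2 = μ / 2 * ‖y - x‖ ^ 2 := by
      field_simp
    have e2 : μ * ⟪y, y - x⟫ - μ * ⟪x, y - x⟫ = μ * ‖y - x‖ ^ 2 := by
      rw [← mul_sub, ← inner_sub_left, real_inner_self_eq_norm_sq]
    rw [real_inner_comm, inner_sub_left]
    linarith
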